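/- Let 0 < d < 4/5 with d ≠ 1/3 and d ≠ 2/3. Then ∫₀¹∫₀¹ u^{2-2d}(1-u)^{1-2d} v^{1-d} (1-uv)^{-d} ₂F₁(1,d;2-d;v) dv du = [Γ(2-2d)Γ(2-3d)Γ(2-d)Γ(3d-2)/(Γ(5-5d)Γ(d)²)]·₃F₂(2-2d,2d-1,3d-2; d,3d-1; 1) + Γ(4-5d)Γ(3-3d)Γ(2-d)Γ(3d-2)²/(Γ(5-5d)Γ(d)²). -/

import Mathlib

open Real MeasureTheory

/-- Pochhammer symbol `(a)_k = a (a+1) ⋯ (a+k-1)` for real `a`. -/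
noncomputable def poch (a : ℝ) (k : ℕ) : ℝ := (ascPochhammer ℝ k).eval a

/-- Gaussian hypergeometric function `₂F₁(a,b;c;z)`. -/
noncomputable def hyp2F1 (a b c z : ℝ) : ℝ :=
  ∑' k : ℕ, (poch a k * poch b k) / poch c k * z ^ k / (Nat.factorial k)

/-- Generalized hypergeometric function `₃F₂(a₁,a₂,a₃;b₁,b₂;z)`. -/
noncomputable def hyp3F2 (a₁ a₂ a₃ b₁ b₂ z : ℝ) : ℝ :=
  ∑' k : ℕ, (poch a₁ k * poch a₂ k * poch a₃ k) / (poch b₁ k * poch b₂ k) * z ^ k /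
    (Nat.factorial k)

/-- Generalized hypergeometric function `₄F₃(a₁,a₂,a₃,a₄;b₁,b₂,b₃;z)`. -/
noncomputable def hyp4F3 (a₁ a₂ a₃ a₄ b₁ b₂ b₃ z : ℝ) : ℝ :=
  ∑' k : ℕ, (poch a₁ k * poch a₂ k * poch a₃ k * poch a₄ k) /
    (poch b₁ k * poch b₂ k * poch b₃ k) * z ^ k / (Nat.factorial k)

/-!
Expanding `(1 - u v) ^ (-a)` by the binomial series and integrating termwise turns the double
integral into a single series whose coefficients are Beta values times the moments
`∫₀¹ v ^ (c + n - 1) ₂F₁(1, b; c; v) dv`. These satisfy a first-order recursion in `n`, so each is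
a multiple of a partial sum of an explicit series; interchanging the two sums and applying Gauss's
theorem leaves one `₃F₂` at `1`, which Thomae's transformation carries to another.

For that one there is a three-term relation. Since
`1 / ((e + k) (f + j)) = (1 / (e + k) + 1 / (f + j)) / (e + f + k + j)`, summing against binomial
weights in `k` and `j` expresses a product of two Beta values as a sum of two `₃F₂` at `1`.
Contiguity relations carry this identity past the range in which the double series converges.
-/

open Filter Topology Asymptotics
open scoped Nat

theorem poch_zero (a : ℝ) : poch a 0 = 1 := by simp [poch]

theorem poch_succ (a : ℝ) (k : ℕ) : poch a (k + 1) = poch a k * (a + k) := by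
  simp [poch, ascPochhammer_succ_eval]

theorem poch_add (a : ℝ) (m k : ℕ) : poch a (m + k) = poch a m * poch (a + m) k := by
  induction k with
  | zero => simp [poch_zero]
  | succ k ih => rw [← add_assoc, poch_succ, ih, poch_succ]; push_cast; ring

theorem poch_succ_left (a : ℝ) (k : ℕ) : poch a (k + 1) = a * poch (a + 1) k := by
  simpa [poch_succ, poch_zero, add_comm] using poch_add a 1 k

theorem poch_eq_prod (a : ℝ) (k : ℕ) : poch a k = ∏ j ∈ Finset.range k, (a + j) := by
  induction k with
  | zero => simp [poch_zero]
  | succ k ih => rw [poch_succ, ih, Finset.prod_range_succ]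

theorem poch_one (k : ℕ) : poch 1 k = k ! := by simp [poch]

theorem poch_pos {a : ℝ} (ha : 0 < a) (k : ℕ) : 0 < poch a k := ascPochhammer_pos k a ha

theorem poch_le_poch {a b : ℝ} (ha : 0 < a) (h : a ≤ b) (k : ℕ) : poch a k ≤ poch b k := by
  simp only [poch_eq_prod]
  gcongr

/-- `c` is not one of the poles `0, -1, -2, …` of the Gamma function; equivalently, no Pochhammer
symbol `(c)_k` vanishes, so that `c` may be a lower parameter of a hypergeometric series. -/
def NotGammaPole (c : ℝ) : Prop := ∀ m : ℕ, c + m ≠ 0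

namespace NotGammaPole

variable {c : ℝ}

theorem of_pos (h : 0 < c) : NotGammaPole c := fun m => by positivity

theorem of_neg_two_lt (h : -2 < c) (h0 : c ≠ 0) (h1 : c ≠ -1) : NotGammaPole c := by
  rintro (_ | _ | m) hm
  · exact h0 (by simpa using hm)
  · exact h1 (by norm_num at hm; linarith)
  · push_cast at hm
    linarith [(Nat.cast_nonneg m : (0 : ℝ) ≤ m)]

theorem add_nat (h : NotGammaPole c) (n : ℕ) : NotGammaPole (c + n) := fun m => by
  simpa [add_assoc] using h (n + m)

theorem add_one (h : NotGammaPole c) : NotGammaPole (c + 1) := by simpa using h.add_nat 1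

theorem ne_zero (h : NotGammaPole c) : c ≠ 0 := by simpa using h 0

theorem poch_ne_zero (h : NotGammaPole c) (k : ℕ) : poch c k ≠ 0 := by
  rw [poch_eq_prod, Finset.prod_ne_zero_iff]
  exact fun j _ => h j

theorem Gamma_ne_zero (h : NotGammaPole c) : Gamma c ≠ 0 :=
  Real.Gamma_ne_zero fun m hm => h m (by rw [hm]; ring)

theorem Gamma_add_nat (h : NotGammaPole c) (k : ℕ) : Gamma (c + k) = poch c k * Gamma c := by
  induction k with
  | zero => simp [poch_zero]
  | succ k ih => rw [poch_succ, Nat.cast_succ, ← add_assoc, Real.Gamma_add_one (h k), ih]; ring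

theorem poch_add_one (h : NotGammaPole c) (k : ℕ) : poch (c + 1) k = poch c k * (c + k) / c := by
  rw [eq_div_iff h.ne_zero, ← poch_succ, poch_succ_left, mul_comm]

end NotGammaPole

theorem mul_inv_Gamma_add_one (s : ℝ) : s * (Gamma (s + 1))⁻¹ = (Gamma s)⁻¹ := by
  rcases eq_or_ne s 0 with rfl | hs
  · simp [Real.Gamma_zero]
  · rw [Real.Gamma_add_one hs]; field_simp

theorem tendsto_div_add_one_rpow (r : ℝ) :
    Tendsto (fun n : ℕ => ((n : ℝ) / (n + 1)) ^ r) atTop (𝓝 1) := by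
  simpa using (tendsto_natCast_div_add_atTop (1 : ℝ)).rpow_const (p := r) (Or.inl one_ne_zero)

theorem tendsto_poch_div_factorial_mul_rpow (a : ℝ) :
    Tendsto (fun k : ℕ => poch a k / (k ! * ((k : ℝ) + 1) ^ (a - 1))) atTop (𝓝 (Gamma a)⁻¹) := by
  by_cases ha : NotGammaPole a
  · rw [← tendsto_add_atTop_iff_nat 1]
    have h := (((GammaSeq_tendsto_Gamma a).inv₀ ha.Gamma_ne_zero).mul
      (tendsto_div_add_one_rpow a)).mul
      ((tendsto_add_atTop_iff_nat 1).2 (tendsto_div_add_one_rpow (a - 1)))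
    simp only [mul_one] at h
    refine h.congr' ?_
    filter_upwards [eventually_gt_atTop 0] with n hn
    have hn' : (0 : ℝ) < n := by exact_mod_cast hn
    have hpow : ((n : ℝ) + 1) ^ a = ((n : ℝ) + 1) ^ (a - 1) * (n + 1) := by
      rw [← rpow_add_one (by positivity)]; ring_nf
    rw [GammaSeq, ← poch_eq_prod, div_rpow hn'.le (by positivity),
      div_rpow (by positivity) (by positivity), Nat.factorial_succ, hpow]
    push_cast
    field_simp
  · obtain ⟨m, hm⟩ := not_forall_not.1 ha
    rw [(Gamma_eq_zero_iff a).2 ⟨m, by linarith⟩, inv_zero]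
    refine tendsto_const_nhds.congr' ?_
    filter_upwards [eventually_gt_atTop m] with n hn
    rw [poch_eq_prod, Finset.prod_eq_zero (Finset.mem_range.2 hn) hm, zero_div]

theorem natCast_add_one_rpow_mul (x y : ℝ) (k : ℕ) :
    ((k : ℝ) + 1) ^ x * ((k : ℝ) + 1) ^ y = ((k : ℝ) + 1) ^ (x + y) :=
  (rpow_add (by positivity) _ _).symm

theorem isBigO_natCast_add_one_rpow_of_tendsto {f : ℕ → ℝ} {r l : ℝ}
    (h : Tendsto (fun k : ℕ => f k / ((k : ℝ) + 1) ^ r) atTop (𝓝 l)) :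
    f =O[atTop] fun k : ℕ => ((k : ℝ) + 1) ^ r :=
  isBigO_of_div_tendsto_nhds
    (Eventually.of_forall fun k hk => absurd hk (rpow_pos_of_pos (by positivity) r).ne') l h

theorem isBigO_poch_div_factorial (a : ℝ) :
    (fun k : ℕ => poch a k / k !) =O[atTop] fun k : ℕ => ((k : ℝ) + 1) ^ (a - 1) :=
  isBigO_natCast_add_one_rpow_of_tendsto <|
    (tendsto_poch_div_factorial_mul_rpow a).congr fun k => by rw [div_div]

theorem NotGammaPole.isBigO_factorial_div_poch {c : ℝ} (hc : NotGammaPole c) :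
    (fun k : ℕ => k ! / poch c k) =O[atTop] fun k : ℕ => ((k : ℝ) + 1) ^ (1 - c) := by
  refine isBigO_natCast_add_one_rpow_of_tendsto <| ((tendsto_poch_div_factorial_mul_rpow c).inv₀
    (inv_ne_zero hc.Gamma_ne_zero)).congr fun k => ?_
  rw [inv_div, ← neg_sub c 1, rpow_neg (by positivity), div_inv_eq_mul, div_mul_eq_mul_div]

theorem isBigO_inv_add_natCast (e : ℝ) :
    (fun k : ℕ => (e + k)⁻¹) =O[atTop] fun k : ℕ => ((k : ℝ) + 1) ^ (-1 : ℝ) := by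
  refine isBigO_natCast_add_one_rpow_of_tendsto ((((tendsto_natCast_div_add_atTop e).mul
    ((tendsto_natCast_div_add_atTop (1 : ℝ)).inv₀ one_ne_zero))).congr' ?_)
  filter_upwards [eventually_gt_atTop 0] with n hn
  have : (0 : ℝ) < n := by exact_mod_cast hn
  rw [rpow_neg_one, inv_div, div_inv_eq_mul, add_comm e]
  field_simp

theorem summable_of_isBigO_natCast_add_one_rpow {f : ℕ → ℝ} {r : ℝ} (hr : r < -1)
    (h : f =O[atTop] fun k : ℕ => ((k : ℝ) + 1) ^ r) : Summable f :=
  summable_of_isBigO_nat (by simpa using (summable_nat_add_iff 1).2 (summable_nat_rpow.2 hr)) h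

theorem tendsto_zero_of_isBigO_natCast_add_one_rpow {f : ℕ → ℝ} {r : ℝ} (hr : r < 0)
    (h : f =O[atTop] fun k : ℕ => ((k : ℝ) + 1) ^ r) : Tendsto f atTop (𝓝 0) := by
  have hatTop : Tendsto (fun k : ℕ => (k : ℝ) + 1) atTop atTop :=
    tendsto_atTop_add_const_right _ _ tendsto_natCast_atTop_atTop
  refine h.trans_tendsto ?_
  simpa [Function.comp_def] using (tendsto_rpow_neg_atTop (neg_pos.2 hr)).comp hatTop

theorem hasSum_of_eq {ι : Type*} {f g : ι → ℝ} {s t : ℝ} (h : HasSum f s) (hfg : ∀ i, g i = f i)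
    (hst : t = s) : HasSum g t := by
  rwa [hst, show g = f from funext hfg]

theorem hasSum_of_eq_sub_of_tendsto_zero {f G : ℕ → ℝ} (hf : Summable f)
    (h : ∀ k, f k = G k - G (k + 1)) (hG : Tendsto G atTop (𝓝 0)) : HasSum f (G 0) := by
  refine hf.hasSum_iff_tendsto_nat.2 ?_
  simpa only [h, Finset.sum_range_sub', sub_zero] using hG.const_sub (G 0)

/-- The coefficient of `z ^ k` in the Gaussian series `₂F₁(a,b;c;z)`. -/
noncomputable def hyp2F1Coeff (a b c : ℝ) (k : ℕ) : ℝ := poch a k * poch b k / (poch c k * k !)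

/-- The moment `∫₀¹ t^(e-1) ₂F₁(a,b;c;t) dt`, encoded by the series that results from integrating
termwise; as a series it makes sense for every `e` that is not a pole of Gamma. -/
noncomputable def hyp2F1Moment (a b c e : ℝ) : ℝ := ∑' k : ℕ, hyp2F1Coeff a b c k * (e + k)⁻¹

section

variable {a b c e : ℝ}

theorem hyp3F2_one_eq_mul_hyp2F1Moment (he : NotGammaPole e) :
    hyp3F2 a b e c (e + 1) 1 = e * hyp2F1Moment a b c e := by
  rw [hyp3F2, hyp2F1Moment, ← tsum_mul_left]
  refine tsum_congr fun k => ?_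
  have := he.poch_ne_zero k
  rw [he.poch_add_one, hyp2F1Coeff, one_pow, mul_one, ← div_div_eq_mul_div]
  field_simp

theorem isBigO_hyp2F1Coeff (a b : ℝ) (hc : NotGammaPole c) :
    hyp2F1Coeff a b c =O[atTop] fun k : ℕ => ((k : ℝ) + 1) ^ (a + b - c - 1) := by
  have h := ((isBigO_poch_div_factorial a).mul (isBigO_poch_div_factorial b)).mul
    hc.isBigO_factorial_div_poch
  simp only [natCast_add_one_rpow_mul] at h
  refine (h.congr_left fun k => ?_).congr_right fun k => ?_
  · rw [hyp2F1Coeff]; field_simp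
  · ring_nf

theorem summable_hyp2F1Coeff (hc : NotGammaPole c) (h : a + b < c) :
    Summable (hyp2F1Coeff a b c) :=
  summable_of_isBigO_natCast_add_one_rpow (by linarith) (isBigO_hyp2F1Coeff a b hc)

theorem summable_hyp2F1Moment (hc : NotGammaPole c) (e : ℝ) (h : a + b < c + 1) :
    Summable (fun k : ℕ => hyp2F1Coeff a b c k * (e + k)⁻¹) := by
  have hO := (isBigO_hyp2F1Coeff a b hc).mul (isBigO_inv_add_natCast e)
  simp only [natCast_add_one_rpow_mul] at hO
  exact summable_of_isBigO_natCast_add_one_rpow (by linarith) hO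

end

section Gauss

variable {a b c : ℝ}

theorem tendsto_natCast_mul_hyp2F1Coeff (hc : NotGammaPole c) (h : a + b < c) :
    Tendsto (fun k : ℕ => k * hyp2F1Coeff a b c k) atTop (𝓝 0) := by
  have hk : (fun k : ℕ => (k : ℝ)) =O[atTop] fun k : ℕ => ((k : ℝ) + 1) ^ (1 : ℝ) := by
    refine IsBigO.of_bound 1 (Eventually.of_forall fun k => ?_)
    rw [rpow_one, norm_of_nonneg (by positivity), norm_of_nonneg (by positivity)]
    linarith
  have hO := hk.mul (isBigO_hyp2F1Coeff a b hc)
  simp only [natCast_add_one_rpow_mul] at hO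
  exact tendsto_zero_of_isBigO_natCast_add_one_rpow (by linarith) hO

theorem tsum_hyp2F1Coeff_contiguous (hc : NotGammaPole c) (h : a + b < c) :
    c * (c - a - b) * ∑' k, hyp2F1Coeff a b c k =
      (c - a) * (c - b) * ∑' k, hyp2F1Coeff a b (c + 1) k := by
  have hS := (summable_hyp2F1Coeff hc h).mul_left (c * (c - a - b))
  have hS' := (summable_hyp2F1Coeff (a := a) (b := b) hc.add_one (by linarith)).mul_left
    ((c - a) * (c - b))
  have hsum := hasSum_of_eq_sub_of_tendsto_zero
    (G := fun k => c * ((k : ℝ) * hyp2F1Coeff a b c k)) (hS.sub hS') (fun k => ?_)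
    (by simpa using (tendsto_natCast_mul_hyp2F1Coeff hc h).const_mul c)
  · rw [← sub_eq_zero, ← tsum_mul_left, ← tsum_mul_left, ← hS.tsum_sub hS', hsum.tsum_eq]
    simp
  · have := hc k
    simp only [hyp2F1Coeff, poch_succ, hc.poch_add_one, Nat.factorial_succ]
    push_cast
    field_simp
    ring

theorem tsum_hyp2F1Coeff_add_nat (hc : NotGammaPole c) (h : a + b < c) (n : ℕ) :
    poch c n * poch (c - a - b) n * ∑' k, hyp2F1Coeff a b c k =
      poch (c - a) n * poch (c - b) n * ∑' k, hyp2F1Coeff a b (c + n) k := by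
  induction n with
  | zero => simp [poch_zero]
  | succ n ih =>
    have hn : a + b < c + n := by linarith [(Nat.cast_nonneg n : (0 : ℝ) ≤ n)]
    have hstep := tsum_hyp2F1Coeff_contiguous (hc.add_nat n) hn
    simp only [poch_succ, Nat.cast_succ, ← add_assoc]
    linear_combination (c + n) * (c + n - a - b) * ih + poch (c - a) n * poch (c - b) n * hstep

theorem tendsto_hyp2F1Coeff_succ_add_nat (a b : ℝ) (hc : 0 < c) (k : ℕ) :
    Tendsto (fun n : ℕ => hyp2F1Coeff a b (c + n) (k + 1)) atTop (𝓝 0) := by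
  have hle (n : ℕ) : ((n : ℝ) + c) * poch (c + 1) k ≤ poch (c + n) (k + 1) := by
    rw [poch_succ_left, add_comm (n : ℝ)]
    exact mul_le_mul_of_nonneg_left (poch_le_poch (by linarith) (by linarith) k) (by linarith)
  have hpoch : Tendsto (fun n : ℕ => poch (c + n) (k + 1)) atTop atTop :=
    tendsto_atTop_mono hle <| Tendsto.atTop_mul_const (poch_pos (by linarith) k) <|
      tendsto_atTop_add_const_right _ _ tendsto_natCast_atTop_atTop
  exact (hpoch.atTop_mul_const (by positivity)).const_div_atTop _

theorem tendsto_tsum_hyp2F1Coeff_add_nat_of_pos (hc : 0 < c) (h : a + b < c) :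
    Tendsto (fun n : ℕ => ∑' k, hyp2F1Coeff a b (c + n) k) atTop (𝓝 1) := by
  have hlim : (1 : ℝ) = ∑' k : ℕ, if k = 0 then 1 else 0 := by simp
  rw [hlim]
  refine tendsto_tsum_of_dominated_convergence
    (summable_hyp2F1Coeff (.of_pos hc) h).norm (fun k => ?_) (.of_forall fun n k => ?_)
  · cases k with
    | zero => simp [hyp2F1Coeff, poch_zero]
    | succ k => simpa using tendsto_hyp2F1Coeff_succ_add_nat a b hc k
  · have hck := poch_pos hc k
    have hle := poch_le_poch hc (by simp : c ≤ c + n) k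
    simp only [hyp2F1Coeff, norm_div, norm_mul, norm_of_nonneg hck.le,
      norm_of_nonneg (hck.le.trans hle), Real.norm_natCast]
    gcongr

theorem tendsto_tsum_hyp2F1Coeff_add_nat (a b c : ℝ) :
    Tendsto (fun n : ℕ => ∑' k, hyp2F1Coeff a b (c + n) k) atTop (𝓝 1) := by
  obtain ⟨N, hN⟩ := exists_nat_gt (max (-c) (a + b - c))
  obtain ⟨hpos, hlt⟩ := max_lt_iff.1 hN
  rw [← tendsto_add_atTop_iff_nat N]
  refine (tendsto_tsum_hyp2F1Coeff_add_nat_of_pos (a := a) (b := b) (c := c + N)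
    (by linarith) (by linarith)).congr fun n => ?_
  rw [Nat.cast_add, add_assoc, add_comm (N : ℝ)]

/-- Let `n → ∞` in the contiguity relation between the parameters `c` and `c + n`: the series with
parameter `c + n` tends to `1`, and the Pochhammer symbols become Gamma values because
`(x)_n / (n! (n + 1) ^ (x - 1)) → 1 / Γ(x)`. -/
theorem hasSum_hyp2F1Coeff (hc : NotGammaPole c) (h : a + b < c) :
    HasSum (hyp2F1Coeff a b c) (Gamma c * Gamma (c - a - b) / (Gamma (c - a) * Gamma (c - b))) := by
  have hL := ((tendsto_poch_div_factorial_mul_rpow c).mul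
    (tendsto_poch_div_factorial_mul_rpow (c - a - b))).mul_const (∑' k, hyp2F1Coeff a b c k)
  have hR := ((tendsto_poch_div_factorial_mul_rpow (c - a)).mul
    (tendsto_poch_div_factorial_mul_rpow (c - b))).mul (tendsto_tsum_hyp2F1Coeff_add_nat a b c)
  have heq := tendsto_nhds_unique hL (hR.congr fun n => ?_)
  · have := hc.Gamma_ne_zero
    have := (NotGammaPole.of_pos (by linarith : 0 < c - a - b)).Gamma_ne_zero
    convert (summable_hyp2F1Coeff hc h).hasSum using 1
    field_simp at heq ⊢
    linarith
  · have hpow : ((n : ℝ) + 1) ^ (c - a - 1) * ((n : ℝ) + 1) ^ (c - b - 1) =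
        ((n : ℝ) + 1) ^ (c - 1) * ((n : ℝ) + 1) ^ (c - a - b - 1) := by
      simp only [natCast_add_one_rpow_mul]; ring_nf
    rw [div_mul_div_comm, div_mul_div_comm, mul_mul_mul_comm, hpow, mul_mul_mul_comm (n ! : ℝ),
      div_mul_eq_mul_div, div_mul_eq_mul_div, tsum_hyp2F1Coeff_add_nat hc h]

theorem hasSum_poch_mul_poch_div_Gamma (hc : 0 < c) (habc : NotGammaPole (a + b + c)) :
    HasSum (fun k : ℕ => poch a k * poch b k / (k ! * Gamma (a + b + c + k)))
      (Gamma c / (Gamma (a + c) * Gamma (b + c))) := by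
  have := habc.Gamma_ne_zero
  refine hasSum_of_eq ((hasSum_hyp2F1Coeff (a := a) (b := b) habc (by linarith)).div_const
    (Gamma (a + b + c))) (fun k => ?_) ?_
  · rw [hyp2F1Coeff, habc.Gamma_add_nat]
    field_simp
  · rw [show a + b + c - a - b = c by ring, show a + b + c - a = b + c by ring,
      show a + b + c - b = a + c by ring]
    field_simp

theorem hasSum_poch_div_factorial_mul_inv {x y : ℝ} (hx : x < 1) (hy : NotGammaPole y) :
    HasSum (fun k : ℕ => poch x k / k ! * (y + k)⁻¹)
      (Gamma y * Gamma (1 - x) / Gamma (y + 1 - x)) := by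
  have hy0 := hy.ne_zero
  refine hasSum_of_eq ((hasSum_hyp2F1Coeff (a := x) (b := y) hy.add_one (by linarith)).div_const y)
    (fun k => ?_) ?_
  · have := hy.poch_ne_zero k
    rw [hyp2F1Coeff, hy.poch_add_one]
    field_simp
  · rw [Gamma_add_one hy0, show y + 1 - x - y = 1 - x by ring, add_sub_cancel_left, Gamma_one]
    field_simp

end Gauss

section Thomae

variable {a b c D E s : ℝ}

theorem hasSum_columns_of_hasSum_rows {f : ℕ → ℕ → ℝ} (hf : ∀ i j, 0 ≤ f i j) {r c : ℕ → ℝ}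
    (hr : ∀ i, HasSum (f i) (r i)) (hc : ∀ j, HasSum (fun i => f i j) (c j)) {S : ℝ}
    (hS : HasSum r S) : HasSum c S := by
  obtain ⟨T, hT⟩ : Summable (fun p : ℕ × ℕ => f p.1 p.2) :=
    (summable_prod_of_nonneg fun p => hf p.1 p.2).2 ⟨fun i => (hr i).summable,
      hS.summable.congr fun i => (hr i).tsum_eq.symm⟩
  have hT' : HasSum (fun p : ℕ × ℕ => f p.2 p.1) T := (Equiv.prodComm ℕ ℕ).hasSum_iff.2 hT
  rw [hS.unique (hT.prod_fiberwise hr)]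
  exact hT'.prod_fiberwise hc

theorem summable_hyp3F2_one (hD : NotGammaPole D) (hE : NotGammaPole E) (h : a + b + c < D + E) :
    Summable fun k : ℕ =>
      poch a k * poch b k * poch c k / (poch D k * poch E k) * 1 ^ k / k ! := by
  have hO := ((isBigO_hyp2F1Coeff a b hD).mul (isBigO_poch_div_factorial c)).mul
    hE.isBigO_factorial_div_poch
  simp only [natCast_add_one_rpow_mul] at hO
  refine (summable_of_isBigO_natCast_add_one_rpow (by linarith) hO).congr fun k => ?_
  rw [hyp2F1Coeff, one_pow]
  field_simp

theorem hyp3F2_comm_left (a₁ a₂ a₃ b₁ b₂ z : ℝ) :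
    hyp3F2 a₁ a₂ a₃ b₁ b₂ z = hyp3F2 a₂ a₁ a₃ b₁ b₂ z := by
  simp only [hyp3F2, mul_comm (poch a₁ _)]

theorem hasSum_poch_mul_Gamma_div (ha : NotGammaPole a) (hD : NotGammaPole D)
    (hE : NotGammaPole E) (h : a + b + c < D + E) :
    HasSum (fun k : ℕ => poch b k * poch c k / k ! *
        (Gamma (a + k) / (Gamma (D + k) * Gamma (E + k))))
      (Gamma a / (Gamma D * Gamma E) * hyp3F2 a b c D E 1) := by
  refine hasSum_of_eq ((summable_hyp3F2_one hD hE h).hasSum.mul_left _) (fun k => ?_) rfl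
  rw [ha.Gamma_add_nat, hD.Gamma_add_nat, hE.Gamma_add_nat, one_pow]
  field_simp

/-- By Gauss's theorem, both series are iterated sums of
`(b)_i (c)_i (p)_j (q)_j / (i! j! Γ(b+c+s+i+j))`, over `j` first and over `i` first. -/
theorem hasSum_poch_mul_Gamma_div_swap {p q S : ℝ} (ha : 0 < a) (hb : 0 < b) (hc : 0 < c)
    (hp : 0 < p) (hq : 0 < q) (hs : 0 < s) (hpq : p + q + a = b + c + s)
    (h : HasSum (fun i : ℕ => poch b i * poch c i / i ! *
      (Gamma (a + i) / (Gamma (q + a + i) * Gamma (p + a + i)))) S) :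
    HasSum (fun j : ℕ => poch p j * poch q j / j ! *
      (Gamma (s + j) / (Gamma (c + s + j) * Gamma (b + s + j)))) S := by
  let f (i j : ℕ) : ℝ :=
    poch b i * poch c i / i ! * (poch p j * poch q j / (j ! * Gamma (b + c + s + i + j)))
  refine hasSum_columns_of_hasSum_rows (f := f) (fun i j => ?_) (fun i => ?_) (fun j => ?_) h
  · have := poch_pos hb i
    have := poch_pos hc i
    have := poch_pos hp j
    have := poch_pos hq j
    positivity
  · have hgauss := hasSum_poch_mul_poch_div_Gamma (a := p) (b := q) (c := a + i) (by positivity)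
      (.of_pos (by positivity))
    rw [show p + q + (a + i) = b + c + s + i by linarith, mul_comm (Gamma _),
      ← add_assoc q, ← add_assoc p] at hgauss
    exact hgauss.mul_left _
  · have hgauss := hasSum_poch_mul_poch_div_Gamma (a := b) (b := c) (c := s + j) (by positivity)
      (.of_pos (by positivity))
    rw [mul_comm (Gamma _), ← add_assoc c, ← add_assoc b] at hgauss
    refine hasSum_of_eq (hgauss.mul_left _) (fun i => ?_) rfl
    simp only [f, show b + c + s + (i : ℝ) + j = b + c + (s + j) + i by ring]
    ring

theorem hyp3F2_one_thomae (ha : 0 < a) (hb : 0 < b) (hc : 0 < c) (haD : a < D) (haE : a < E)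
    (hs : 0 < s) (hDE : D + E = a + b + c + s) :
    hyp3F2 a b c D E 1 = Gamma D * Gamma E * Gamma s / (Gamma a * Gamma (b + s) * Gamma (c + s)) *
      hyp3F2 (E - a) s (D - a) (c + s) (b + s) 1 := by
  have hD : 0 < D := by linarith
  have hE : 0 < E := by linarith
  have hleft := hasSum_poch_mul_Gamma_div (a := a) (b := b) (c := c) (.of_pos ha) (.of_pos hD)
    (.of_pos hE) (by linarith)
  have hright := hasSum_poch_mul_Gamma_div (a := s) (b := E - a) (c := D - a) (.of_pos hs)
    (.of_pos (add_pos hc hs)) (.of_pos (add_pos hb hs)) (by linarith)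
  have heq := (hasSum_poch_mul_Gamma_div_swap (p := E - a) (q := D - a) ha hb hc (by linarith)
    (by linarith) hs (by linarith) (by simpa only [sub_add_cancel] using hleft)).unique hright
  rw [hyp3F2_comm_left s] at heq
  field_simp at heq ⊢
  linear_combination heq

end Thomae

section ThreeTerm

variable {a b c e f x y : ℝ}

/-- The double series `∑ (x)_k (y)_j / (k! j! (e + k) (a + k + j))`, encoded by the single series
left after summing over `j`, so that it is also available for `1 ≤ y`. -/
noncomputable def partialFractionSum (a x y e : ℝ) : ℝ :=
  Gamma a * Gamma (1 - y) / Gamma (a + 1 - y) * hyp2F1Moment a x (a + 1 - y) e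

theorem hasSum_prod_poch_mul_inv_mul_inv (ha : 0 < a) (he : NotGammaPole e) (hx : x < 1)
    (hy : y < 1) :
    HasSum (fun p : ℕ × ℕ => poch x p.1 / p.1 ! * (poch y p.2 / p.2 !) *
        ((e + p.1)⁻¹ * (a + p.1 + p.2)⁻¹))
      (partialFractionSum a x y e) := by
  have hy' : NotGammaPole (a + 1 - y) := .of_pos (by linarith)
  have hsummable : Summable (fun p : ℕ × ℕ => poch x p.1 / p.1 ! * (poch y p.2 / p.2 !) *
      ((e + p.1)⁻¹ * (a + p.1 + p.2)⁻¹)) := by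
    refine .of_norm_bounded (summable_mul_of_summable_norm
      (hasSum_poch_div_factorial_mul_inv hx he).summable.norm
      (hasSum_poch_div_factorial_mul_inv hy (.of_pos ha)).summable.norm).norm fun ⟨k, j⟩ => ?_
    rw [mul_mul_mul_comm]
    simp only [norm_mul]
    have hle : ‖(a + (k : ℝ) + j)⁻¹‖ ≤ ‖(a + (j : ℝ))⁻¹‖ := by
      rw [norm_of_nonneg (by positivity), norm_of_nonneg (by positivity)]
      gcongr
      simp
    gcongr
  have hrow (k : ℕ) : HasSum
      (fun j : ℕ => poch x k / k ! * (poch y j / j !) * ((e + k)⁻¹ * (a + k + j)⁻¹))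
      (Gamma a * Gamma (1 - y) / Gamma (a + 1 - y) *
        (hyp2F1Coeff a x (a + 1 - y) k * (e + k)⁻¹)) := by
    have hak : NotGammaPole (a + k) := .of_pos (by positivity)
    refine hasSum_of_eq ((hasSum_poch_div_factorial_mul_inv hy hak).mul_left
      (poch x k / k ! * (e + k)⁻¹)) (fun j => by ring) ?_
    rw [show a + (k : ℝ) + 1 - y = a + 1 - y + k by ring, hy'.Gamma_add_nat,
      (NotGammaPole.of_pos ha).Gamma_add_nat, hyp2F1Coeff]
    field_simp
  convert hsummable.hasSum using 1
  rw [partialFractionSum, hyp2F1Moment, ← tsum_mul_left]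
  exact (hsummable.hasSum.prod_fiberwise hrow).tsum_eq

/-- Sum the partial fraction identity
`1 / ((e + k) (f + j)) = (1 / (e + k) + 1 / (f + j)) / (e + f + k + j)` with the weights
`(x)_k (y)_j / (k! j!)`. -/
theorem beta_mul_beta_eq_partialFractionSum_add_of_lt_one (he : NotGammaPole e)
    (hf : NotGammaPole f) (hef : 0 < e + f) (hx : x < 1) (hy : y < 1) :
    Gamma e * Gamma (1 - x) / Gamma (e + 1 - x) * (Gamma f * Gamma (1 - y) / Gamma (f + 1 - y)) =
      partialFractionSum (e + f) x y e + partialFractionSum (e + f) y x f := by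
  have hE := hasSum_poch_div_factorial_mul_inv hx he
  have hF := hasSum_poch_div_factorial_mul_inv hy hf
  refine (hE.mul hF (summable_mul_of_summable_norm hE.summable.norm hF.summable.norm)).unique ?_
  refine hasSum_of_eq ((hasSum_prod_poch_mul_inv_mul_inv hef he hx hy).add
    ((Equiv.prodComm ℕ ℕ).hasSum_iff.2 (hasSum_prod_poch_mul_inv_mul_inv hef hf hy hx)))
    (fun ⟨k, j⟩ => ?_) rfl
  have := he k
  have := hf j
  simp only [Function.comp_apply, Equiv.prodComm_apply, Prod.fst_swap, Prod.snd_swap]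
  field_simp
  ring

theorem sub_mul_hyp2F1Moment_add_one (hc : NotGammaPole c) (he : NotGammaPole e)
    (h : a + b < c + 1) :
    (c - e) * hyp2F1Moment a b (c + 1) e =
      c * hyp2F1Moment a b c e - ∑' k, hyp2F1Coeff a b (c + 1) k := by
  rw [hyp2F1Moment, hyp2F1Moment, ← tsum_mul_left, ← tsum_mul_left,
    ← ((summable_hyp2F1Moment hc e h).mul_left c).tsum_sub (summable_hyp2F1Coeff hc.add_one h)]
  refine tsum_congr fun k => ?_
  have := hc k
  have := he k
  rw [hyp2F1Coeff, hyp2F1Coeff, hc.poch_add_one]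
  field_simp
  ring

theorem sub_mul_hyp2F1Moment (hc : NotGammaPole c) (he : NotGammaPole e) (h : a + b < c) :
    (e - b) * hyp2F1Moment a b c e =
      -b * hyp2F1Moment a (b + 1) c e + ∑' k, hyp2F1Coeff a b c k := by
  rw [hyp2F1Moment, hyp2F1Moment, ← tsum_mul_left, ← tsum_mul_left,
    ← ((summable_hyp2F1Moment hc e (by linarith)).mul_left (-b)).tsum_add
      (summable_hyp2F1Coeff hc h)]
  refine tsum_congr fun k => ?_
  have := hc.poch_ne_zero k
  have := he k
  have hpoch : b * poch (b + 1) k = poch b k * (b + k) := by rw [← poch_succ_left, poch_succ]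
  rw [hyp2F1Coeff, hyp2F1Coeff]
  field_simp
  linear_combination (poch a k) * hpoch

theorem sub_mul_partialFractionSum_left (ha : 0 < a) (he : NotGammaPole e) (hxy : x + y < 1)
    (hy : NotGammaPole (-y)) (hay : NotGammaPole (a - y)) :
    (a - e - y) * partialFractionSum a x y e =
      -y * partialFractionSum a x (y + 1) e -
        Gamma a * Gamma (1 - x - y) / Gamma (a + 1 - x - y) := by
  have hcontig := sub_mul_hyp2F1Moment_add_one (a := a) (b := x) hay he (by linarith)
  rw [(hasSum_hyp2F1Coeff hay.add_one (by linarith)).tsum_eq,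
    show a - y + 1 - a - x = 1 - x - y by ring, show a - y + 1 - a = -y + 1 by ring,
    show a - y + 1 - x = a + 1 - x - y by ring, show a - y - e = a - e - y by ring,
    Gamma_add_one hy.ne_zero, Gamma_add_one hay.ne_zero] at hcontig
  rw [partialFractionSum, partialFractionSum, show 1 - y = -y + 1 by ring,
    show a + 1 - y = a - y + 1 by ring, show 1 - (y + 1) = -y by ring,
    show a + 1 - (y + 1) = a - y by ring, Gamma_add_one hy.ne_zero, Gamma_add_one hay.ne_zero,
    mul_left_comm, hcontig]
  have := hy.Gamma_ne_zero
  have := neg_ne_zero.1 hy.ne_zero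
  have := hay.Gamma_ne_zero
  have := hay.ne_zero
  field_simp
  ring

theorem sub_mul_partialFractionSum_right (ha : 0 < a) (hf : NotGammaPole f) (hx : x < 1)
    (hxy : x + y < 1) :
    (f - y) * partialFractionSum a y x f =
      -y * partialFractionSum a (y + 1) x f +
        Gamma a * Gamma (1 - x - y) / Gamma (a + 1 - x - y) := by
  have hax : NotGammaPole (a + 1 - x) := .of_pos (by linarith)
  have hcontig := sub_mul_hyp2F1Moment (a := a) (b := y) hax hf (by linarith)
  rw [(hasSum_hyp2F1Coeff hax (by linarith)).tsum_eq,
    show a + 1 - x - a - y = 1 - x - y by ring, show a + 1 - x - a = 1 - x by ring] at hcontig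
  rw [partialFractionSum, partialFractionSum, mul_left_comm, hcontig]
  have := (Gamma_pos_of_pos (sub_pos.2 hx)).ne'
  have := hax.Gamma_ne_zero
  field_simp

theorem beta_mul_beta_eq_partialFractionSum_add_add_one (he : NotGammaPole e) (hf : NotGammaPole f)
    (hef : 0 < e + f) (hx : x < 1) (hxy : x + y < 1) (hy : NotGammaPole (-y))
    (hefy : NotGammaPole (e + f - y))
    (h : Gamma e * Gamma (1 - x) / Gamma (e + 1 - x) *
        (Gamma f * Gamma (1 - y) / Gamma (f + 1 - y)) =
      partialFractionSum (e + f) x y e + partialFractionSum (e + f) y x f) :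
    Gamma e * Gamma (1 - x) / Gamma (e + 1 - x) * (Gamma f * Gamma (-y) / Gamma (f - y)) =
      partialFractionSum (e + f) x (y + 1) e + partialFractionSum (e + f) (y + 1) x f := by
  have hleft := sub_mul_partialFractionSum_left hef he hxy hy hefy
  have hright := sub_mul_partialFractionSum_right hef hf hx hxy
  rw [add_sub_cancel_left] at hleft
  have hpole := mul_inv_Gamma_add_one (f - y)
  rw [show 1 - y = -y + 1 by ring, Gamma_add_one hy.ne_zero, div_eq_mul_inv _ (Gamma (f + 1 - y)),
    show f + 1 - y = f - y + 1 by ring] at h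
  refine mul_left_cancel₀ hy.ne_zero ?_
  rw [div_eq_mul_inv _ (Gamma (f - y)), ← hpole]
  linear_combination (f - y) * h + hleft + hright

theorem beta_mul_beta_eq_partialFractionSum_add (he : NotGammaPole e) (hf : NotGammaPole f)
    (hef : 0 < e + f) (hx : x < 1) (hxy : x + y < 2) (hy : NotGammaPole (1 - y))
    (hefy : NotGammaPole (e + f + 1 - y)) :
    Gamma e * Gamma (1 - x) / Gamma (e + 1 - x) * (Gamma f * Gamma (1 - y) / Gamma (f + 1 - y)) =
      partialFractionSum (e + f) x y e + partialFractionSum (e + f) y x f := by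
  obtain ⟨n, hn⟩ := exists_nat_gt (y - 1)
  induction n generalizing y with
  | zero =>
    exact beta_mul_beta_eq_partialFractionSum_add_of_lt_one he hf hef hx (by simpa using hn)
  | succ n ih =>
    push_cast at hn
    have hstep := beta_mul_beta_eq_partialFractionSum_add_add_one (y := y - 1) he hf hef hx
      (by linarith) (by simpa using hy)
      (by rwa [← sub_add, sub_add_eq_add_sub])
      (ih (by linarith) (by simpa [← sub_add, sub_add_eq_add_sub] using hy.add_one)
        (by simpa [← sub_add, sub_add_eq_add_sub] using hefy.add_one) (by linarith))
    rwa [sub_add_cancel, neg_sub, ← sub_add, sub_add_eq_add_sub] at hstep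

end ThreeTerm

section Moments

variable {a b c e q s : ℝ}

theorem hyp2F1Coeff_one_left (b c : ℝ) (k : ℕ) : hyp2F1Coeff 1 b c k = poch b k / poch c k := by
  rw [hyp2F1Coeff, poch_one]
  field_simp

theorem hyp2F1Moment_one_add_one (hc : NotGammaPole c) (he : NotGammaPole e) (hbc : b < c) :
    (e + 1 - b) * hyp2F1Moment 1 b c (e + 1) =
      (e + 1 - c) * hyp2F1Moment 1 b c e + (c - 1) / e := by
  have hS (x : ℝ) := summable_hyp2F1Moment (a := 1) (b := b) hc x (by linarith)
  have hsub := ((hS (e + 1)).mul_left (e + 1 - b)).sub ((hS e).mul_left (e + 1 - c))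
  let G (k : ℕ) : ℝ := hyp2F1Coeff 1 b c k * (1 + (c - 1 - e) * (e + k)⁻¹)
  have hG : Tendsto G atTop (𝓝 0) := by
    have hcoeff := tendsto_zero_of_isBigO_natCast_add_one_rpow (by linarith)
      (isBigO_hyp2F1Coeff 1 b hc)
    have hinv := tendsto_zero_of_isBigO_natCast_add_one_rpow (by norm_num)
      (isBigO_inv_add_natCast e)
    simpa using hcoeff.mul ((hinv.const_mul (c - 1 - e)).const_add 1)
  have htel := (hasSum_of_eq_sub_of_tendsto_zero hsub (fun k => ?_) hG).tsum_eq
  · rw [((hS (e + 1)).mul_left _).tsum_sub ((hS e).mul_left _), tsum_mul_left, tsum_mul_left]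
      at htel
    have hG0 : G 0 = (c - 1) / e := by
      have := he.ne_zero
      simp only [G, hyp2F1Coeff_one_left, poch_zero, Nat.cast_zero, add_zero]
      field_simp
      ring
    rw [hyp2F1Moment, hyp2F1Moment]
    linear_combination htel + hG0
  · have := hc k
    have := he k
    have := he.add_one k
    simp only [G, hyp2F1Coeff_one_left, poch_succ, Nat.cast_succ,
      show e + ((k : ℝ) + 1) = e + 1 + k by ring]
    field_simp
    ring

theorem hyp2F1Moment_one_add_nat (hc : NotGammaPole (c - 1)) (hbc : b < c) (n : ℕ) :
    poch (c - b + 1) n / n ! * hyp2F1Moment 1 b c (c + n) =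
      (c - 1) / (c - b) * ∑ i ∈ Finset.range (n + 1), poch (c - b) i / i ! * (c - 1 + i)⁻¹ := by
  have hc' : NotGammaPole c := by simpa using hc.add_one
  have hc0 := hc.ne_zero
  have hbc0 : c - b ≠ 0 := by linarith
  induction n with
  | zero =>
    have hrec := hyp2F1Moment_one_add_one hc' hc hbc
    rw [sub_add_cancel, sub_self, zero_mul, zero_add, div_self hc0] at hrec
    simp only [poch_zero, Nat.factorial_zero, Nat.cast_zero, Nat.cast_one, add_zero, zero_add,
      Finset.sum_range_one]
    field_simp
    linarith
  | succ n ih =>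
    have hrec := hyp2F1Moment_one_add_one hc' (hc'.add_nat n) hbc
    have hcn := hc' n
    rw [show c + (n : ℝ) + 1 - c = n + 1 by ring, show c + (n : ℝ) + 1 - b = c - b + 1 + n by ring]
      at hrec
    rw [Finset.sum_range_succ, mul_add, ← ih, poch_succ, poch_succ_left, Nat.factorial_succ,
      Nat.cast_succ, show c - 1 + ((n : ℝ) + 1) = c + n by ring, ← add_assoc]
    push_cast
    field_simp at hrec ⊢
    linear_combination poch (c - b + 1) n * hrec

theorem hasSum_poch_div_poch_tail (hs : NotGammaPole s) (has : a < s) (i : ℕ) :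
    HasSum (fun m : ℕ => poch a (i + m) / poch (s + 1) (i + m))
      (s / (s - a) * (poch a i / poch s i)) := by
  have hsi := hs.add_nat i
  have hsa : s - a ≠ 0 := by linarith
  refine hasSum_of_eq ((hasSum_hyp2F1Coeff (a := 1) (b := a + i) hsi.add_one (by linarith)).mul_left
    (poch a i / poch (s + 1) i)) (fun m => ?_) ?_
  · rw [poch_add, poch_add, hyp2F1Coeff_one_left, add_right_comm, div_mul_div_comm]
  · have := hs i
    have := hs.ne_zero
    have := hs.poch_ne_zero i
    have := hsi.Gamma_ne_zero
    have := (NotGammaPole.of_pos (sub_pos.2 has)).Gamma_ne_zero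
    rw [show s + i + 1 - 1 - (a + i) = s - a by ring, add_sub_cancel_right,
      show s + i + 1 - (a + i) = s - a + 1 by ring, Gamma_add_one hsi.ne_zero, Gamma_add_one hsa,
      hs.poch_add_one]
    field_simp

theorem hasSum_mul_sum_range_succ {p w t : ℕ → ℝ} {S : ℝ} (hp : ∀ n, 0 ≤ p n) (hw : ∀ i, 0 ≤ w i)
    (ht : ∀ i, HasSum (fun m => p (i + m)) (t i)) (hS : HasSum (fun i => w i * t i) S) :
    HasSum (fun n => p n * ∑ i ∈ Finset.range (n + 1), w i) S := by
  refine hasSum_columns_of_hasSum_rows (f := fun i n => w i * if i ≤ n then p n else 0)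
    (fun i n => mul_nonneg (hw i) (by split_ifs <;> simp [hp]))
    (fun i => HasSum.mul_left (w i) ?_) (fun n => ?_) hS
  · rw [← (add_right_injective i).hasSum_iff]
    · simpa [Function.comp_def] using ht i
    · intro n hn
      exact if_neg fun hin => hn ⟨n - i, by simp [hin]⟩
  · rw [Finset.mul_sum]
    refine hasSum_of_eq (hasSum_sum_of_ne_finset_zero (s := Finset.range (n + 1)) fun i hi => ?_)
      (fun _ => rfl) (Finset.sum_congr rfl fun i hi => ?_)
    · rw [if_neg (by simpa using hi), mul_zero]
    · rw [if_pos (Finset.mem_range_succ_iff.1 hi), mul_comm]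

theorem hasSum_poch_mul_hyp2F1Moment_one (ha : 0 < a) (hc : 1 < c) (hbc : b < c) (hq : 0 < q)
    (haq : a < q + 1) (habc : a < c - b + q) :
    HasSum (fun n : ℕ => poch a n / n ! * hyp2F1Moment 1 b c (c + n) *
        (Gamma (c - b + 1 + n) * Gamma q / Gamma (c - b + 1 + n + q)))
      (Gamma (c - b) * Gamma q / (Gamma (c - b + q) * (c - b + q - a)) *
        hyp3F2 a (c - b) (c - 1) (c - b + q) c 1) := by
  have hcb : 0 < c - b := by linarith
  have hs : 0 < c - b + q := by linarith
  have hs1 : NotGammaPole (c - b + q + 1) := .of_pos (add_pos hs one_pos)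
  have hsummable := (summable_hyp2F1Moment (a := a) (b := c - b) (.of_pos hs) (c - 1)
    (by linarith)).hasSum.mul_left ((c - b + q) / (c - b + q - a))
  have hsum := hasSum_mul_sum_range_succ (w := fun i => poch (c - b) i / i ! * (c - 1 + i)⁻¹)
    (fun n => (div_pos (poch_pos ha n) (poch_pos (add_pos hs one_pos) n)).le) (fun i => ?_)
    (hasSum_poch_div_poch_tail (.of_pos hs) habc)
    (hasSum_of_eq hsummable (fun i => by rw [hyp2F1Coeff]; field_simp) rfl)
  · refine hasSum_of_eq (hsum.mul_left (Gamma (c - b) * Gamma q * (c - 1) /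
      Gamma (c - b + q + 1))) (fun n => ?_) ?_
    · rw [show c - b + 1 + n + q = c - b + q + 1 + n by ring, NotGammaPole.Gamma_add_nat hs1,
        NotGammaPole.Gamma_add_nat (.of_pos (add_pos hcb one_pos)), Gamma_add_one hcb.ne']
      have hM := hyp2F1Moment_one_add_nat (.of_pos (sub_pos.2 hc)) hbc n
      rw [div_mul_eq_mul_div (c - 1), eq_div_iff hcb.ne'] at hM
      linear_combination Gamma (c - b) * Gamma q / Gamma (c - b + q + 1) *
        (poch a n / poch (c - b + q + 1) n) * hM
    · have hF := hyp3F2_one_eq_mul_hyp2F1Moment (a := a) (b := c - b) (c := c - b + q)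
        (.of_pos (sub_pos.2 hc))
      rw [sub_add_cancel] at hF
      rw [Gamma_add_one hs.ne', hF, hyp2F1Moment]
      have := (Gamma_pos_of_pos hs).ne'
      have : c - b + q - a ≠ 0 := by linarith
      field_simp
  · have := poch_pos hcb i
    have : 0 < c - 1 + i := by linarith [(Nat.cast_nonneg i : (0 : ℝ) ≤ i)]
    positivity

end Moments

section Integrals

theorem integrable_and_hasSum_integral_of_nonneg {α : Type*} [MeasurableSpace α] {μ : Measure α}
    {F : ℕ → α → ℝ} {G : α → ℝ} (hF : ∀ n, Integrable (F n) μ) (hpos : ∀ n, 0 ≤ᵐ[μ] F n)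
    (hG : ∀ᵐ x ∂μ, HasSum (fun n => F n x) (G x)) (hsum : Summable fun n => ∫ x, F n x ∂μ) :
    Integrable G μ ∧ HasSum (fun n => ∫ x, F n x ∂μ) (∫ x, G x ∂μ) := by
  have hFG : (fun x => ∑' n, F n x) =ᵐ[μ] G := hG.mono fun x hx => hx.tsum_eq
  have hnorm (n : ℕ) : ∫ x, ‖F n x‖ ∂μ = ∫ x, F n x ∂μ :=
    integral_congr_ae <| (hpos n).mono fun x hx => norm_of_nonneg hx
  refine ⟨⟨?_, ?_⟩, ?_⟩
  · refine aestronglyMeasurable_of_tendsto_ae atTop (f := fun n x => ∑ i ∈ Finset.range n, F i x)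
      (fun n => (integrable_finsetSum _ fun i _ => hF i).aestronglyMeasurable)
      (hG.mono fun x hx => hx.tendsto_sum_nat)
  · have hlintegral (n : ℕ) : ∫⁻ x, ‖F n x‖ₑ ∂μ = ENNReal.ofReal (∫ x, F n x ∂μ) := by
      rw [← ofReal_integral_norm_eq_lintegral_enorm (hF n), hnorm]
    calc ∫⁻ x, ‖G x‖ₑ ∂μ ≤ ∫⁻ x, ∑' n, ‖F n x‖ₑ ∂μ :=
          lintegral_mono_ae <| hG.mono fun x hx => hx.tsum_eq ▸ enorm_tsum_le_tsum_enorm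
      _ = ∑' n, ENNReal.ofReal (∫ x, F n x ∂μ) := by
          rw [lintegral_tsum fun n => (hF n).aestronglyMeasurable.enorm]
          exact tsum_congr hlintegral
      _ < ⊤ := hsum.tsum_ofReal_lt_top
  · rw [← integral_congr_ae hFG]
    exact hasSum_integral_of_summable_integral_norm hF (by simpa only [hnorm] using hsum)

variable {a b c e p q u v α : ℝ}

theorem hasSum_poch_div_factorial_mul_pow (a : ℝ) {x : ℝ} (hx : |x| < 1) :
    HasSum (fun n : ℕ => poch a n / n ! * x ^ n) ((1 - x) ^ (-a)) := by
  have h := (one_div_one_sub_rpow_hasFPowerSeriesOnBall_zero a).hasSum (y := x)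
    (by simpa [← ofReal_norm] using hx)
  refine hasSum_of_eq h (fun n => ?_) ?_
  · have := Ring.factorial_nsmul_multichoose_eq_ascPochhammer a n
    rw [Polynomial.ascPochhammer_smeval_eq_eval, nsmul_eq_mul] at this
    rw [FormalMultilinearSeries.ofScalars_apply_eq, smul_eq_mul, Ring.choose,
      show a + n - 1 - n + 1 = a by ring, poch, ← this]
    field_simp
  · rw [rpow_neg (by linarith [(abs_lt.1 hx).2]), zero_add, one_div]

theorem integrableOn_and_integral_Ioo_rpow_mul_one_sub_rpow (hp : 0 < p) (hq : 0 < q) :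
    IntegrableOn (fun x : ℝ => x ^ (p - 1) * (1 - x) ^ (q - 1)) (Set.Ioo 0 1) ∧
      ∫ x in Set.Ioo (0 : ℝ) 1, x ^ (p - 1) * (1 - x) ^ (q - 1) =
        Gamma p * Gamma q / Gamma (p + q) := by
  have hconv := Complex.betaIntegral_convergent (u := p) (v := q) (by simpa) (by simpa)
  have hval := Complex.betaIntegral_eq_Gamma_mul_div (p : ℂ) q (by simpa) (by simpa)
  have hreal : Set.EqOn (fun x : ℝ => (x : ℂ) ^ ((p : ℂ) - 1) * (1 - (x : ℂ)) ^ ((q : ℂ) - 1))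
      (fun x : ℝ => ((x ^ (p - 1) * (1 - x) ^ (q - 1) : ℝ) : ℂ)) (Set.Ioo 0 1) := by
    intro x hx
    push_cast [Complex.ofReal_cpow hx.1.le, Complex.ofReal_cpow (sub_pos.2 hx.2).le]
    rfl
  rw [intervalIntegrable_iff_integrableOn_Ioo_of_le zero_le_one] at hconv
  rw [Complex.betaIntegral, intervalIntegral.integral_of_le zero_le_one,
    integral_Ioc_eq_integral_Ioo, setIntegral_congr_fun measurableSet_Ioo hreal,
    integral_complex_ofReal, Complex.Gamma_ofReal, Complex.Gamma_ofReal, ← Complex.ofReal_add,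
    Complex.Gamma_ofReal] at hval
  exact ⟨by simpa [IntegrableOn] using (hconv.congr_fun hreal measurableSet_Ioo).re,
    by exact_mod_cast hval⟩

theorem integrableOn_and_integral_Ioo_rpow (hp : 0 < p) :
    IntegrableOn (fun x : ℝ => x ^ (p - 1)) (Set.Ioo 0 1) ∧
      ∫ x in Set.Ioo (0 : ℝ) 1, x ^ (p - 1) = p⁻¹ := by
  have hbeta := integrableOn_and_integral_Ioo_rpow_mul_one_sub_rpow hp one_pos
  simp only [sub_self, rpow_zero, mul_one, Gamma_one, Gamma_add_one hp.ne'] at hbeta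
  have := (Gamma_pos_of_pos hp).ne'
  exact ⟨hbeta.1, hbeta.2.trans (by field_simp)⟩

theorem hyp2F1Coeff_nonneg (ha : 0 < a) (hb : 0 < b) (hc : 0 < c) (k : ℕ) :
    0 ≤ hyp2F1Coeff a b c k := by
  have := poch_pos ha k
  have := poch_pos hb k
  have := poch_pos hc k
  rw [hyp2F1Coeff]
  positivity

theorem hyp2F1Moment_nonneg (ha : 0 < a) (hb : 0 < b) (hc : 0 < c) (he : 0 < e) :
    0 ≤ hyp2F1Moment a b c e :=
  tsum_nonneg fun k => mul_nonneg (hyp2F1Coeff_nonneg ha hb hc k) (by positivity)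

theorem hyp2F1Moment_add_nat_le (ha : 0 < a) (hb : 0 < b) (hc : 0 < c) (he : 0 < e)
    (habc : a + b < c + 1) (n : ℕ) : hyp2F1Moment a b c (e + n) ≤ hyp2F1Moment a b c e := by
  refine (summable_hyp2F1Moment (.of_pos hc) _ habc).tsum_le_tsum (fun k => ?_)
    (summable_hyp2F1Moment (.of_pos hc) _ habc)
  have := hyp2F1Coeff_nonneg ha hb hc k
  gcongr
  simp

theorem hyp2F1_nonneg (ha : 0 < a) (hb : 0 < b) (hc : 0 < c) (hv : 0 ≤ v) :
    0 ≤ hyp2F1 a b c v := by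
  refine tsum_nonneg fun k => ?_
  have := poch_pos ha k
  have := poch_pos hb k
  have := poch_pos hc k
  positivity

theorem hasSum_hyp2F1 (a b : ℝ) (hc : NotGammaPole c) (hv : |v| < 1) :
    HasSum (fun k : ℕ => hyp2F1Coeff a b c k * v ^ k) (hyp2F1 a b c v) := by
  have hO : hyp2F1Coeff a b c =O[atTop] fun k : ℕ => ((k ^ ⌈a + b - c - 1⌉₊ : ℕ) : ℝ) := by
    refine (isBigO_hyp2F1Coeff a b hc).trans (.of_bound (2 ^ ⌈a + b - c - 1⌉₊) ?_)
    filter_upwards [eventually_ge_atTop 1] with k hk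
    have hk1 : (1 : ℝ) ≤ k := by exact_mod_cast hk
    rw [norm_of_nonneg (by positivity), norm_of_nonneg (by positivity), Nat.cast_pow, ← mul_pow]
    calc ((k : ℝ) + 1) ^ (a + b - c - 1) ≤ (k + 1) ^ (⌈a + b - c - 1⌉₊ : ℝ) :=
          rpow_le_rpow_of_exponent_le (by linarith) (Nat.le_ceil _)
      _ ≤ (2 * k) ^ ⌈a + b - c - 1⌉₊ := by
          rw [rpow_natCast]
          gcongr
          linarith
  refine hasSum_of_eq (summable_norm_mul_geometric_of_norm_lt_one' hv hO).of_norm.hasSum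
    (fun _ => rfl) (tsum_congr fun k => ?_)
  rw [hyp2F1Coeff]
  ring

theorem integrableOn_and_integral_rpow_mul_hyp2F1 (ha : 0 < a) (hb : 0 < b) (hc : 0 < c)
    (he : 0 < e) (habc : a + b < c + 1) :
    IntegrableOn (fun v => v ^ (e - 1) * hyp2F1 a b c v) (Set.Ioo 0 1) ∧
      ∫ v in Set.Ioo (0 : ℝ) 1, v ^ (e - 1) * hyp2F1 a b c v = hyp2F1Moment a b c e := by
  have hpow (k : ℕ) := integrableOn_and_integral_Ioo_rpow (p := e + k) (by positivity)
  have hint (k : ℕ) : ∫ v in Set.Ioo (0 : ℝ) 1, hyp2F1Coeff a b c k * v ^ (e + k - 1) =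
      hyp2F1Coeff a b c k * (e + k)⁻¹ := by
    rw [integral_const_mul, (hpow k).2]
  have hsum := summable_hyp2F1Moment (.of_pos hc) e habc
  have hseries : ∀ v ∈ Set.Ioo (0 : ℝ) 1,
      HasSum (fun k : ℕ => hyp2F1Coeff a b c k * v ^ (e + k - 1))
        (v ^ (e - 1) * hyp2F1 a b c v) := by
    intro v hv
    refine hasSum_of_eq ((hasSum_hyp2F1 a b (.of_pos hc) ?_).mul_left (v ^ (e - 1)))
      (fun k => ?_) rfl
    · exact (abs_of_pos hv.1).trans_lt hv.2
    · rw [add_sub_right_comm, rpow_add_natCast hv.1.ne']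
      ring
  obtain ⟨hintegrable, hhasSum⟩ := integrable_and_hasSum_integral_of_nonneg
    (fun k => (hpow k).1.const_mul (hyp2F1Coeff a b c k))
    (fun k => ae_restrict_of_forall_mem measurableSet_Ioo fun v hv =>
      mul_nonneg (hyp2F1Coeff_nonneg ha hb hc k) (rpow_nonneg hv.1.le _))
    (ae_restrict_of_forall_mem measurableSet_Ioo hseries) (by simpa only [hint] using hsum)
  simp only [hint] at hhasSum
  exact ⟨hintegrable, hhasSum.unique hsum.hasSum⟩

theorem hasSum_integral_rpow_mul_one_sub_mul_rpow_mul_hyp2F1 (hα : 0 < α) (ha : 0 < a)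
    (hb : 0 < b) (hc : 0 < c) (he : 0 < e) (habc : a + b < c + 1) (hu : u ∈ Set.Ioo 0 1) :
    HasSum (fun n : ℕ => poch α n / n ! * u ^ n * hyp2F1Moment a b c (e + n))
      (∫ v in Set.Ioo (0 : ℝ) 1, v ^ (e - 1) * (1 - u * v) ^ (-α) * hyp2F1 a b c v) := by
  have hM (n : ℕ) := integrableOn_and_integral_rpow_mul_hyp2F1 (e := e + n) ha hb hc
    (by positivity) habc
  have hbinom {x : ℝ} (hx : x ∈ Set.Ioo 0 1) := hasSum_poch_div_factorial_mul_pow α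
    (x := x) ((abs_of_pos hx.1).trans_lt hx.2)
  have hint (n : ℕ) : ∫ v in Set.Ioo (0 : ℝ) 1, poch α n / n ! * u ^ n *
      (v ^ (e + n - 1) * hyp2F1 a b c v) = poch α n / n ! * u ^ n * hyp2F1Moment a b c (e + n) := by
    rw [integral_const_mul, (hM n).2]
  have hcoeff (n : ℕ) : 0 ≤ poch α n / n ! * u ^ n := by
    have := poch_pos hα n
    have := hu.1
    positivity
  have hsum : Summable fun n : ℕ => poch α n / n ! * u ^ n * hyp2F1Moment a b c (e + n) :=
    .of_nonneg_of_le (fun n => mul_nonneg (hcoeff n) (hyp2F1Moment_nonneg ha hb hc (by positivity)))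
      (fun n => mul_le_mul_of_nonneg_left (hyp2F1Moment_add_nat_le ha hb hc he habc n) (hcoeff n))
      ((hbinom hu).summable.mul_right (hyp2F1Moment a b c e))
  have hseries : ∀ v ∈ Set.Ioo (0 : ℝ) 1,
      HasSum (fun n : ℕ => poch α n / n ! * u ^ n * (v ^ (e + n - 1) * hyp2F1 a b c v))
        (v ^ (e - 1) * (1 - u * v) ^ (-α) * hyp2F1 a b c v) := by
    intro v hv
    have huv : u * v ∈ Set.Ioo 0 1 :=
      ⟨mul_pos hu.1 hv.1, mul_lt_one_of_nonneg_of_lt_one_left hu.1.le hu.2 hv.2.le⟩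
    refine hasSum_of_eq ((hbinom huv).mul_left (v ^ (e - 1) * hyp2F1 a b c v)) (fun n => ?_)
      (by ring)
    rw [add_sub_right_comm, rpow_add_natCast hv.1.ne']
    ring
  simpa only [hint] using (integrable_and_hasSum_integral_of_nonneg
    (fun n => (hM n).1.const_mul (poch α n / n ! * u ^ n))
    (fun n => ae_restrict_of_forall_mem measurableSet_Ioo fun v hv => mul_nonneg (hcoeff n)
      (mul_nonneg (rpow_nonneg hv.1.le _) (hyp2F1_nonneg ha hb hc hv.1.le)))
    (ae_restrict_of_forall_mem measurableSet_Ioo hseries) (by simpa only [hint] using hsum)).2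

theorem integral_integral_rpow_mul_hyp2F1_one (ha : 0 < a) (hb : 0 < b) (hc : 1 < c) (hbc : b < c)
    (hq : 0 < q) (haq : a < q + 1) (habc : a < c - b + q) :
    ∫ u in (0 : ℝ)..1, ∫ v in (0 : ℝ)..1, u ^ (c - b) * (1 - u) ^ (q - 1) * v ^ (c - 1) *
        (1 - u * v) ^ (-a) * hyp2F1 1 b c v =
      Gamma (c - b) * Gamma q / (Gamma (c - b + q) * (c - b + q - a)) *
        hyp3F2 a (c - b) (c - 1) (c - b + q) c 1 := by
  have hc0 : 0 < c := by linarith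
  have hbeta (n : ℕ) := integrableOn_and_integral_Ioo_rpow_mul_one_sub_rpow (p := c - b + 1 + n)
    (by linarith [(Nat.cast_nonneg n : (0 : ℝ) ≤ n)]) hq
  have hint (n : ℕ) : ∫ u in Set.Ioo (0 : ℝ) 1, poch a n / n ! * hyp2F1Moment 1 b c (c + n) *
      (u ^ (c - b + 1 + n - 1) * (1 - u) ^ (q - 1)) = poch a n / n ! * hyp2F1Moment 1 b c (c + n) *
        (Gamma (c - b + 1 + n) * Gamma q / Gamma (c - b + 1 + n + q)) := by
    rw [integral_const_mul, (hbeta n).2]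
  have hsum := hasSum_poch_mul_hyp2F1Moment_one ha hc hbc hq haq habc
  have hseries : ∀ u ∈ Set.Ioo (0 : ℝ) 1,
      HasSum (fun n : ℕ => poch a n / n ! * hyp2F1Moment 1 b c (c + n) *
          (u ^ (c - b + 1 + n - 1) * (1 - u) ^ (q - 1)))
        (∫ v in (0 : ℝ)..1, u ^ (c - b) * (1 - u) ^ (q - 1) * v ^ (c - 1) *
          (1 - u * v) ^ (-a) * hyp2F1 1 b c v) := by
    intro u hu
    have hinner := hasSum_integral_rpow_mul_one_sub_mul_rpow_mul_hyp2F1 ha one_pos hb hc0 hc0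
      (by linarith) hu
    refine hasSum_of_eq (hinner.mul_left (u ^ (c - b) * (1 - u) ^ (q - 1))) (fun n => ?_) ?_
    · rw [add_sub_right_comm, add_sub_cancel_right, rpow_add_natCast hu.1.ne']
      ring
    · rw [intervalIntegral.integral_of_le zero_le_one, integral_Ioc_eq_integral_Ioo,
        ← integral_const_mul]
      simp only [mul_assoc]
  have hhasSum := (integrable_and_hasSum_integral_of_nonneg
    (fun n => (hbeta n).1.const_mul (poch a n / n ! * hyp2F1Moment 1 b c (c + n)))
    (fun n => ae_restrict_of_forall_mem measurableSet_Ioo fun u hu => ?_)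
    (ae_restrict_of_forall_mem measurableSet_Ioo hseries)
    (by simpa only [hint] using hsum.summable)).2
  · simp only [hint] at hhasSum
    rw [intervalIntegral.integral_of_le zero_le_one, integral_Ioc_eq_integral_Ioo]
    exact hhasSum.unique hsum
  · exact mul_nonneg (mul_nonneg (div_nonneg (poch_pos ha n).le (by positivity))
      (hyp2F1Moment_nonneg one_pos hb hc0 (by positivity)))
      (mul_nonneg (rpow_nonneg hu.1.le _) (rpow_nonneg (sub_pos.2 hu.2).le _))

end Integrals

theorem double_integral_I2a_form1_general {a b c q : ℝ} (ha : 0 < a) (hb : 0 < b) (hc : 1 < c)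
    (hq : 0 < q) (hac : a < c) (hbc : b < c) (haq : a < q + 1) (habc : a < c - b + q)
    (haq' : NotGammaPole (a - q)) (hbq : NotGammaPole (b - q)) (hcq : NotGammaPole (c - q)) :
    ∫ u in (0 : ℝ)..1, ∫ v in (0 : ℝ)..1, u ^ (c - b) * (1 - u) ^ (q - 1) * v ^ (c - 1) *
        (1 - u * v) ^ (-a) * hyp2F1 1 b c v =
      Gamma (c - b) * Gamma (q + 1 - a) * Gamma c * Gamma (a - q) /
          (Gamma (c - b + q - a + 1) * Gamma a * Gamma (c - q) * (q - b)) *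
          hyp3F2 (c - a) (1 - q) (b - q) (c - q) (b - q + 1) 1
        + Gamma (c - b + q - a) * Gamma (q + 1 - a) * Gamma c * Gamma (a - q) * Gamma (b - q) *
          Gamma q / (Gamma (c - b + q - a + 1) * Gamma a * Gamma b * Gamma (c - a)) := by
  have hf : NotGammaPole (c - b + q - a) := .of_pos (by linarith)
  have hthomae := hyp3F2_one_thomae (a := a) (b := c - b) (c := c - 1) (D := c - b + q) (E := c)
    (s := q + 1 - a) ha (by linarith) (by linarith) habc hac (by linarith) (by ring)
  have hthree := beta_mul_beta_eq_partialFractionSum_add (x := 1 - q) (y := q + 1 - a) hbq hf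
    (by linarith) (by linarith) (by linarith) (by convert haq' using 1; ring)
    (by convert hcq using 1; ring)
  rw [show c - b + (q + 1 - a) = c - b + q - a + 1 by ring, hyp3F2_one_eq_mul_hyp2F1Moment hf,
    show c - 1 + (q + 1 - a) = c - a + q by ring] at hthomae
  rw [partialFractionSum, partialFractionSum, show b - q + (c - b + q - a) = c - a by ring,
    show 1 - (1 - q) = q by ring, show 1 - (q + 1 - a) = a - q by ring,
    show b - q + 1 - (1 - q) = b by ring, show c - b + q - a + 1 - (q + 1 - a) = c - b by ring,
    show c - a + 1 - (q + 1 - a) = c - q by ring, show c - a + 1 - (1 - q) = c - a + q by ring]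
    at hthree
  have hΓ {x : ℝ} (hx : 0 < x) : Gamma x ≠ 0 := (Gamma_pos_of_pos hx).ne'
  have := hΓ (sub_pos.2 hac)
  have := hΓ (sub_pos.2 hbc)
  have := hΓ (show 0 < c - b + q by linarith)
  have := hf.ne_zero
  have := hbq.ne_zero
  have hM := eq_sub_of_add_eq' hthree.symm
  rw [integral_integral_rpow_mul_hyp2F1_one ha hb hc hbc hq haq habc, hthomae,
    hyp3F2_one_eq_mul_hyp2F1Moment hbq, ← neg_sub b q]
  generalize c - b + q - a = f at *
  calc _ = Gamma (c - b) * Gamma c * Gamma (q + 1 - a) / (Gamma a * Gamma (f + 1) * Gamma (c - a)) *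
        (Gamma (c - a) * Gamma q / Gamma (c - a + q) *
          hyp2F1Moment (c - a) (q + 1 - a) (c - a + q) f) := by field_simp
    _ = _ := by rw [hM]; field_simp; ring

theorem double_integral_I2a_form1 (d : ℝ) (hd0 : 0 < d) (hd1 : d < 4 / 5)
    (hd3 : d ≠ 1 / 3) (hd4 : d ≠ 2 / 3) :
    (∫ u in (0:ℝ)..1, ∫ v in (0:ℝ)..1,
      u ^ (2 - 2 * d) * (1 - u) ^ (1 - 2 * d) * v ^ (1 - d) * (1 - u * v) ^ (-d) *
        hyp2F1 1 d (2 - d) v)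
    = Real.Gamma (2 - 2 * d) * Real.Gamma (2 - 3 * d) * Real.Gamma (2 - d) *
        Real.Gamma (3 * d - 2) / (Real.Gamma (5 - 5 * d) * Real.Gamma d ^ 2) *
        hyp3F2 (2 - 2 * d) (2 * d - 1) (3 * d - 2) d (3 * d - 1) 1
      + Real.Gamma (4 - 5 * d) * Real.Gamma (3 - 3 * d) * Real.Gamma (2 - d) *
          Real.Gamma (3 * d - 2) ^ 2 / (Real.Gamma (5 - 5 * d) * Real.Gamma d ^ 2) := by
  have hpole : NotGammaPole (3 * d - 2) := .of_neg_two_lt (by linarith)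
    (fun h => hd4 (by linarith)) (fun h => hd3 (by linarith))
  have h23 : 2 - 3 * d ≠ 0 := fun h => hd4 (by linarith)
  have hΓ0 : Gamma (2 - 2 * d) ≠ 0 := (Gamma_pos_of_pos (by linarith)).ne'
  have hgen := double_integral_I2a_form1_general (a := d) (b := d) (c := 2 - d) (q := 2 - 2 * d)
    hd0 hd0 (by linarith) (by linarith) (by linarith) (by linarith) (by linarith) (by linarith)
    (by convert hpole using 1; ring) (by convert hpole using 1; ring)
    (by convert NotGammaPole.of_pos hd0 using 1; ring)
  have hΓ : Gamma (3 - 3 * d) = (2 - 3 * d) * Gamma (2 - 3 * d) := by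
    rw [← Gamma_add_one h23]
    ring_nf
  rw [show 2 - d - d = 2 - 2 * d by ring, show 2 - 2 * d - 1 = 1 - 2 * d by ring,
    show 2 - d - 1 = 1 - d by ring, show 2 - 2 * d + 1 - d = 3 - 3 * d by ring,
    show d - (2 - 2 * d) = 3 * d - 2 by ring, show 2 - 2 * d - d = 2 - 3 * d by ring,
    show 2 - d - (2 - 2 * d) = d by ring, show 1 - (2 - 2 * d) = 2 * d - 1 by ring,
    show 2 - 2 * d + (2 - 2 * d) - d = 4 - 5 * d by ring, show 4 - 5 * d + 1 = 5 - 5 * d by ring,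
    show 3 * d - 2 + 1 = 3 * d - 1 by ring] at hgen
  rw [hgen, hΓ]
  generalize 2 - 3 * d = x, Gamma (2 - 2 * d) = y at *
  field_simp
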